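/- arXiv:2407.08686 — 3 statements merged into one kernel-verified Lean document; each statement's English description precedes it below -/
import Mathlib

section
/- Pool deficit and capacity characterization: Let 0 < λ < τ, let b ≥ 0, r > 0, G > 0 be real numbers, and define h(β) = b·min{β, τ − λ} − r·β for β ≥ 0. If (b − r)(τ − λ) ≥ G (which forces b > r), then setting β⁻ = G/(b − r) and β⁺ = (b(τ − λ) − G)/r one has 0 < β⁻ ≤ β⁺, and for every β ≥ 0: h(β) ≥ G if and only if β⁻ ≤ β ≤ β⁺. If instead (b − r)(τ − λ) < G, then h(β) < G for every β ≥ 0. -/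
/-- **Pool deficit and capacity characterization.**
Let `0 < lam < tau`, `b ≥ 0`, `r > 0`, `G > 0` and define
`h(β) = b * min β (tau − lam) − r * β` for `β ≥ 0`.
If `(b − r)(tau − lam) ≥ G` then, setting `β⁻ = G/(b − r)` and
`β⁺ = (b(tau − lam) − G)/r`, one has `0 < β⁻ ≤ β⁺` and, for every `β ≥ 0`,
`h(β) ≥ G ↔ β⁻ ≤ β ≤ β⁺`.  If instead `(b − r)(tau − lam) < G`, then `h(β) < G`
for every `β ≥ 0`. -/
theorem pool_deficit_capacity_characterization
    (lam tau b r G : ℝ)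
    (hlam : 0 < lam) (hlt : lam < tau)
    (hb : 0 ≤ b) (hr : 0 < r) (hG : 0 < G) :
    ((b - r) * (tau - lam) ≥ G →
      (0 < G / (b - r) ∧
       G / (b - r) ≤ (b * (tau - lam) - G) / r ∧
       ∀ β : ℝ, 0 ≤ β →
         ((b * min β (tau - lam) - r * β ≥ G) ↔
          (G / (b - r) ≤ β ∧ β ≤ (b * (tau - lam) - G) / r)))) ∧
    ((b - r) * (tau - lam) < G →
      ∀ β : ℝ, 0 ≤ β → b * min β (tau - lam) - r * β < G) := by
  obtain ⟨t, ht⟩ : ∃ t, t = tau - lam := ⟨_, rfl⟩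
  have htpos : 0 < t := by linarith
  rw [← ht]
  constructor
  · intro h
    have hbr : 0 < b - r := by
      by_contra hn
      have := mul_nonneg (by linarith : 0 ≤ -(b - r)) htpos.le
      linarith
    have h1 : G / (b - r) ≤ t := by
      rw [div_le_iff₀ hbr]; linarith
    have h2 : t ≤ (b * t - G) / r := by
      rw [le_div_iff₀ hr]; linarith
    refine ⟨div_pos hG hbr, h1.trans h2, fun β _ => ?_⟩
    rcases le_total β t with hβ | hβ
    · rw [min_eq_left hβ, div_le_iff₀ hbr]
      constructor
      · intro h3
        exact ⟨by linarith, hβ.trans h2⟩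
      · rintro ⟨h3, -⟩
        linarith
    · rw [min_eq_right hβ, le_div_iff₀ hr]
      constructor
      · intro h3
        exact ⟨h1.trans hβ, by linarith⟩
      · rintro ⟨-, h3⟩
        linarith
  · intro h β hβ0
    rcases le_total β t with hβ | hβ
    · rw [min_eq_left hβ]
      rcases le_total r b with hc | hc
      · have := mul_le_mul_of_nonneg_left hβ (sub_nonneg.2 hc)
        linarith
      · have := mul_nonneg (sub_nonneg.2 hc) hβ0
        linarith
    · rw [min_eq_right hβ]
      have := mul_le_mul_of_nonneg_left hβ hr.le
      linarith
end

section
/- Sufficient conditions for pure Nash equilibrium in proper delegation games: Let p be a joint strategy profile of a proper delegation game G(ρ, τ, (s, c, ε)) with resulting per-unit delegation reward r. Suppose: (i) every delegator delegates only to feasible pools (d_i(j) > 0 implies pool j is active and feasible); (ii) every non-idle player i earns utility at least ε_i; (iii) every idle player i satisfies max{r, α(s_i, c_min)}·s_i ≤ ε_i, i.e. their utility from unilaterally deviating to delegation is at most ε_i; and (iv) every SPO i, with pledge λ_i = s_i < τ and external delegation β_i, satisfies β⁻(λ_i, c_i, ε_i, r) ≤ β_i ≤ β⁺(λ_i, c_i,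 ε_i, r). Then p is a pure Nash equilibrium: no player can strictly increase their utility by unilaterally changing their action. -/
open scoped Classical

/-- A proper delegation game `G(ρ, τ, (s, c, ε))` with `n` players.  Player `i` has
stake `s i > 0`, pool operation cost `c i` with `0 ≤ cmin ≤ c i`, and idle utility
`eps i > 0`.  The pool reward function is capped separable with cap `tau > max_i s i`:
`ρ(λ,β) = a λ + b λ * min (τ − λ) β`, and the threat of deviation
`α(s,c) = (a s − c)/s` is monotonically nondecreasing in `s` on `(0, max_i s i]`. -/
structure ProperDelegationGame (n : ℕ) where
  s : Fin n → ℝ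
  c : Fin n → ℝ
  eps : Fin n → ℝ
  a : ℝ → ℝ
  b : ℝ → ℝ
  tau : ℝ
  cmin : ℝ
  s_pos : ∀ i, 0 < s i
  eps_pos : ∀ i, 0 < eps i
  cmin_nonneg : 0 ≤ cmin
  cmin_le : ∀ i, cmin ≤ c i
  a_nonneg : ∀ x : ℝ, 0 ≤ x → 0 ≤ a x
  b_nonneg : ∀ x : ℝ, 0 ≤ x → 0 ≤ b x
  tau_gt : ∀ i, s i < tau
  alpha_mono : ∀ x y : ℝ, 0 < x → x ≤ y → (∃ i, y ≤ s i) →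
    (a x - cmin) / x ≤ (a y - cmin) / y

namespace ProperDelegationGame

/-- An action of a player: remain idle, operate a stake pool, or delegate
according to a delegation profile `d : Fin n → ℝ`. -/
inductive Action (n : ℕ) where
  | idle : Action n
  | spo : Action n
  | deleg : (Fin n → ℝ) → Action n

variable {n : ℕ}

/-- A valid action for player `i`: a delegation profile must assign nothing to `i`
itself, be nonnegative, and distribute exactly the stake `s i`. -/
def ValidAction (g : ProperDelegationGame n) (i : Fin n) : Action n → Prop
  | .idle => True
  | .spo => True
  | .deleg d => d i = 0 ∧ (∀ j, 0 ≤ d j) ∧ ∑ j, d j = g.s i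

/-- A valid joint strategy profile. -/
def ValidProfile (g : ProperDelegationGame n) (p : Fin n → Action n) : Prop :=
  ∀ i, g.ValidAction i (p i)

/-- Player `i` is a stake pool operator under `p`. -/
def isSPO (p : Fin n → Action n) (i : Fin n) : Prop := p i = Action.spo

/-- Player `i` is a delegator under `p`. -/
def isDeleg (p : Fin n → Action n) (i : Fin n) : Prop := ∃ d, p i = Action.deleg d

/-- The amount that player `i` delegates to pool `j` under `p`. -/
def delegAmt (p : Fin n → Action n) (i j : Fin n) : ℝ :=
  match p i with
  | .deleg d => d j
  | _ => 0

/-- The pledge of pool `j`: `s j` if `j` is an SPO, `0` otherwise. -/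
noncomputable def pledge (g : ProperDelegationGame n) (p : Fin n → Action n)
    (j : Fin n) : ℝ :=
  if isSPO p j then g.s j else 0

/-- The external stake delegated to pool `j`. -/
def extDeleg (p : Fin n → Action n) (j : Fin n) : ℝ := ∑ i, delegAmt p i j

/-- The total size of pool `j` (pledge plus external delegation). -/
noncomputable def poolSize (g : ProperDelegationGame n) (p : Fin n → Action n)
    (j : Fin n) : ℝ :=
  pledge g p j + extDeleg p j

/-- The capped separable pool reward function `ρ(λ,β) = a λ + b λ * min (τ−λ) β`. -/
noncomputable def rho (g : ProperDelegationGame n) (lam beta : ℝ) : ℝ :=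
  g.a lam + g.b lam * min (g.tau - lam) beta

/-- The threat of deviation `α(x,c) = (a x − c)/x`. -/
noncomputable def alpha (g : ProperDelegationGame n) (x c' : ℝ) : ℝ :=
  (g.a x - c') / x

/-- The per-unit delegation reward of the profile `p`: the maximum of
`α(s i, cmin)` over all delegators `i`, and `0` if there are no delegators. -/
noncomputable def rOf (g : ProperDelegationGame n) (p : Fin n → Action n) : ℝ :=
  if h : (Finset.univ.filter fun i => isDeleg p i).Nonempty then
    (Finset.univ.filter fun i => isDeleg p i).sup' h fun i => g.alpha (g.s i) g.cmin
  else 0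

/-- Pool `j` is (active and) feasible: `j` is an SPO and `ρ(λ_j, β_j) ≥ r·σ_j`. -/
def feasible (g : ProperDelegationGame n) (p : Fin n → Action n) (j : Fin n) : Prop :=
  isSPO p j ∧ rho g (pledge g p j) (extDeleg p j) ≥ rOf g p * poolSize g p j

/-- The reward player `i` receives from delegating to pool `j`: `r · d_i(j)` from an
active feasible pool, the proportional share from an active infeasible pool, `0`
from an inactive pool. -/
noncomputable def delegReward (g : ProperDelegationGame n) (p : Fin n → Action n)
    (i j : Fin n) : ℝ :=
  if isSPO p j then
    (if feasible g p j then rOf g p * delegAmt p i j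
     else (delegAmt p i j / poolSize g p j) * rho g (pledge g p j) (extDeleg p j))
  else 0

/-- The utility of player `i` under profile `p`: `ε_i` if idle, pool rewards minus the
operation cost `c_i` if an SPO, and total delegation rewards if a delegator. -/
noncomputable def utility (g : ProperDelegationGame n) (p : Fin n → Action n)
    (i : Fin n) : ℝ :=
  match p i with
  | .idle => g.eps i
  | .spo =>
      (if feasible g p i then
        rho g (g.s i) (extDeleg p i) - rOf g p * extDeleg p i
       else (g.s i / poolSize g p i) * rho g (g.s i) (extDeleg p i)) - g.c i
  | .deleg _ => ∑ j, delegReward g p i j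

/-- The gap `G(λ,c,ε,r) = max (ε + c − a λ) (max (r − α(λ,cmin)) 0 · λ + (c − cmin))`. -/
noncomputable def gap (g : ProperDelegationGame n) (lam c' eps' r : ℝ) : ℝ :=
  max (eps' + c' - g.a lam)
    (max (r - g.alpha lam g.cmin) 0 * lam + (c' - g.cmin))

/-- The pool deficit `β⁻(λ,c,ε,r)`, valued in `EReal` (it is `⊤` when no amount of
external delegation can keep the SPO content). -/
noncomputable def betaMinus (g : ProperDelegationGame n) (lam c' eps' r : ℝ) : EReal :=
  if (g.b lam - r) * (g.tau - lam) ≥ gap g lam c' eps' r then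
    ((gap g lam c' eps' r / (g.b lam - r) : ℝ) : EReal)
  else ⊤

/-- The pool capacity `β⁺(λ,c,ε,r)`, valued in `EReal` (it is `⊥` when no amount of
external delegation can keep the SPO content). -/
noncomputable def betaPlus (g : ProperDelegationGame n) (lam c' eps' r : ℝ) : EReal :=
  if (g.b lam - r) * (g.tau - lam) ≥ gap g lam c' eps' r then
    (((g.b lam * (g.tau - lam) - gap g lam c' eps' r) / r : ℝ) : EReal)
  else ⊥

/-- `p` is a pure Nash equilibrium: no player can strictly increase their utility by
unilaterally switching to another valid action. -/
def IsPNE (g : ProperDelegationGame n) (p : Fin n → Action n) : Prop :=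
  ∀ i : Fin n, ∀ q : Action n, g.ValidAction i q →
    utility g (Function.update p i q) i ≤ utility g p i

end ProperDelegationGame

open ProperDelegationGame

theorem aux_validUpdate {n : ℕ} (g : ProperDelegationGame n) (p : Fin n → Action n)
    (hv : g.ValidProfile p) (i : Fin n) (q : Action n) (hq : g.ValidAction i q) :
    g.ValidProfile (Function.update p i q) := by
  intro j
  by_cases h : j = i
  · subst h; simpa using hq
  · simpa [Function.update_of_ne h] using hv j

theorem aux_delegAmt_nonneg {n : ℕ} (g : ProperDelegationGame n) (p : Fin n → Action n)
    (hv : g.ValidProfile p) (i j : Fin n) : 0 ≤ delegAmt p i j := by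
  have := hv i
  unfold delegAmt
  cases h : p i with
  | idle => simp
  | spo => simp
  | deleg d => rw [h] at this; exact this.2.1 j

theorem aux_ext_nonneg {n : ℕ} (g : ProperDelegationGame n) (p : Fin n → Action n)
    (hv : g.ValidProfile p) (j : Fin n) : 0 ≤ extDeleg p j :=
  Finset.sum_nonneg fun i _ => aux_delegAmt_nonneg g p hv i j

theorem aux_deleg_le {n : ℕ} (g : ProperDelegationGame n) (p : Fin n → Action n)
    (hv : g.ValidProfile p) (i : Fin n) (d : Fin n → ℝ) (hd : p i = Action.deleg d) :
    utility g p i ≤ max (rOf g p) 0 * g.s i := by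
  have hi := hv i
  rw [hd] at hi
  have hu : utility g p i = ∑ j, delegReward g p i j := by
    unfold utility; rw [hd]
  rw [hu, ← hi.2.2, Finset.mul_sum]
  apply Finset.sum_le_sum
  intro j _
  have hdj := hi.2.1 j
  have ha : delegAmt p i j = d j := by unfold delegAmt; rw [hd]
  have hm0 : 0 ≤ max (rOf g p) 0 := le_max_right _ _
  have hmr : rOf g p ≤ max (rOf g p) 0 := le_max_left _ _
  have hr : rOf g p * d j ≤ max (rOf g p) 0 * d j := mul_le_mul_of_nonneg_right hmr hdj
  unfold delegReward
  rw [ha]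
  split_ifs with h1 h2
  · exact hr
  · refine le_trans ?_ hr
    have hs : 0 < poolSize g p j := by
      have := aux_ext_nonneg g p hv j
      have h3 := g.s_pos j
      unfold poolSize pledge
      rw [if_pos h1]; linarith
    have hlt : rho g (pledge g p j) (extDeleg p j) ≤ rOf g p * poolSize g p j := by
      by_contra hc
      exact h2 ⟨h1, (not_le.mp hc).le⟩
    calc d j / poolSize g p j * rho g (pledge g p j) (extDeleg p j)
        ≤ d j / poolSize g p j * (rOf g p * poolSize g p j) :=
          mul_le_mul_of_nonneg_left hlt (div_nonneg hdj hs.le)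
      _ = rOf g p * d j := by field_simp
  · exact mul_nonneg hm0 hdj

theorem aux_le_rOf {n : ℕ} (g : ProperDelegationGame n) (p : Fin n → Action n)
    (i : Fin n) (hi : isDeleg p i) : g.alpha (g.s i) g.cmin ≤ rOf g p := by
  have hm : i ∈ Finset.univ.filter fun i => isDeleg p i := by simpa using hi
  have hne : (Finset.univ.filter fun i => isDeleg p i).Nonempty := ⟨i, hm⟩
  unfold rOf
  rw [dif_pos hne]
  exact Finset.le_sup' (fun i => g.alpha (g.s i) g.cmin) hm

theorem aux_rOf_update {n : ℕ} (g : ProperDelegationGame n) (p : Fin n → Action n)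
    (i : Fin n) (d : Fin n → ℝ) :
    rOf g (Function.update p i (Action.deleg d)) ≤
      max (rOf g p) (g.alpha (g.s i) g.cmin) := by
  have hm : i ∈ Finset.univ.filter
      fun j => isDeleg (Function.update p i (Action.deleg d)) j :=
    Finset.mem_filter.mpr ⟨Finset.mem_univ _, d, Function.update_self ..⟩
  have hne : (Finset.univ.filter
      fun j => isDeleg (Function.update p i (Action.deleg d)) j).Nonempty := ⟨i, hm⟩
  rw [rOf, dif_pos hne]
  apply Finset.sup'_le
  intro j hj
  by_cases h : j = i
  · subst h; exact le_max_right _ _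
  · refine le_trans (aux_le_rOf g p j ?_) (le_max_left _ _)
    have := (Finset.mem_filter.mp hj).2
    simpa [isDeleg, Function.update_of_ne h] using this

theorem aux_deleg_dev {n : ℕ} (g : ProperDelegationGame n) (p : Fin n → Action n)
    (hv : g.ValidProfile p) (i : Fin n) (d : Fin n → ℝ)
    (hd : g.ValidAction i (Action.deleg d)) (U : ℝ) (hU : 0 ≤ U)
    (hm : max (rOf g p) (g.alpha (g.s i) g.cmin) * g.s i ≤ U) :
    utility g (Function.update p i (Action.deleg d)) i ≤ U := by
  refine le_trans (aux_deleg_le g _ (aux_validUpdate g p hv i _ hd) i d (by simp)) ?_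
  rw [max_mul_of_nonneg _ _ (g.s_pos i).le, zero_mul]
  refine max_le (le_trans ?_ hm) hU
  exact mul_le_mul_of_nonneg_right (aux_rOf_update g p i d) (g.s_pos i).le

theorem aux_alpha_mul {n : ℕ} (g : ProperDelegationGame n) (i : Fin n) :
    g.alpha (g.s i) g.cmin * g.s i = g.a (g.s i) - g.cmin := by
  have := (g.s_pos i).ne'
  unfold alpha; field_simp

theorem aux_spo_dev {n : ℕ} (g : ProperDelegationGame n) (p : Fin n → Action n)
    (hv : g.ValidProfile p)
    (h1 : ∀ i (d : Fin n → ℝ), p i = Action.deleg d → ∀ j, 0 < d j → feasible g p j)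
    (i : Fin n) (hi : p i ≠ Action.spo) :
    utility g (Function.update p i Action.spo) i ≤ g.alpha (g.s i) g.cmin * g.s i := by
  have hext : extDeleg (Function.update p i Action.spo) i = 0 := by
    apply Finset.sum_eq_zero
    intro k _
    unfold delegAmt
    by_cases h : k = i
    · subst h; simp
    · rw [Function.update_of_ne h]
      have hk := hv k
      cases hp : p k with
      | idle => rfl
      | spo => rfl
      | deleg d =>
        rw [hp] at hk
        by_contra hne
        exact hi (h1 k d hp i (lt_of_le_of_ne (hk.2.1 i) (Ne.symm hne))).1
  have hs := g.s_pos i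
  have ht : 0 ≤ g.tau - g.s i := by linarith [g.tau_gt i]
  have hsz : poolSize g (Function.update p i Action.spo) i = g.s i := by
    unfold poolSize pledge
    rw [hext]; simp [isSPO]
  have hrho : rho g (g.s i) 0 = g.a (g.s i) := by
    unfold rho; rw [min_eq_right ht]; ring
  have hu : utility g (Function.update p i Action.spo) i = g.a (g.s i) - g.c i := by
    unfold utility
    rw [Function.update_self]
    simp only [hext, hsz, hrho, div_self hs.ne']
    split_ifs <;> ring
  rw [hu, aux_alpha_mul]
  linarith [g.cmin_le i]

theorem aux_spo_core {n : ℕ} (g : ProperDelegationGame n) (p : Fin n → Action n)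
    (hv : g.ValidProfile p) (i : Fin n) (hp : p i = Action.spo)
    (h4 : betaMinus g (g.s i) (g.c i) (g.eps i) (rOf g p) ≤ (extDeleg p i : EReal) ∧
      (extDeleg p i : EReal) ≤ betaPlus g (g.s i) (g.c i) (g.eps i) (rOf g p)) :
    max (rOf g p) (g.alpha (g.s i) g.cmin) * g.s i ≤ utility g p i := by
  obtain ⟨hm, hM⟩ := h4
  have hs := g.s_pos i
  have ht : 0 < g.tau - g.s i := by linarith [g.tau_gt i]
  have hc := g.cmin_le i
  have hc0 := g.cmin_nonneg
  have hβ := aux_ext_nonneg g p hv i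
  have hal := aux_alpha_mul g i
  unfold betaMinus at hm
  unfold betaPlus at hM
  have hG : max (rOf g p - g.alpha (g.s i) g.cmin) 0 * g.s i + (g.c i - g.cmin) ≤
    gap g (g.s i) (g.c i) (g.eps i) (rOf g p) := le_max_right _ _
  have hpl : pledge g p i = g.s i := if_pos hp
  have hsz : poolSize g p i = g.s i + extDeleg p i := by unfold poolSize; rw [hpl]
  have hu : feasible g p i → utility g p i =
      rho g (g.s i) (extDeleg p i) - rOf g p * extDeleg p i - g.c i := by
    intro hf
    unfold utility; rw [hp]
    simp only [if_pos hf]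
  have hfe : rho g (g.s i) (extDeleg p i) ≥ rOf g p * (g.s i + extDeleg p i) →
      feasible g p i := by
    intro h
    refine ⟨hp, ?_⟩
    rw [hpl, hsz]; exact h
  have hb := g.b_nonneg _ hs.le
  have hrho : rho g (g.s i) (extDeleg p i) =
    g.a (g.s i) + g.b (g.s i) * min (g.tau - g.s i) (extDeleg p i) := rfl
  generalize gap g (g.s i) (g.c i) (g.eps i) (rOf g p) = G at *
  generalize rOf g p = r at *
  generalize extDeleg p i = β at *
  generalize g.alpha (g.s i) g.cmin = α at *
  generalize rho g (g.s i) β = R at *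
  generalize g.b (g.s i) = b at *
  generalize g.tau - g.s i = t at *
  split_ifs at hm hM with hcond
  · rw [EReal.coe_le_coe_iff] at hm hM
    have hpos : 0 ≤ max (r - α) 0 * g.s i := mul_nonneg (le_max_right _ _) hs.le
    have hge : (r - α) * g.s i ≤ max (r - α) 0 * g.s i :=
      mul_le_mul_of_nonneg_right (le_max_left _ _) hs.le
    have hG0 : 0 ≤ G := by linarith
    have hbr : 0 ≤ b - r := by
      by_contra h
      have := mul_neg_of_neg_of_pos (not_le.mp h) ht
      linarith
    have hA : G ≤ (b - r) * β := by
      rcases hbr.lt_or_eq with h | h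
      · rw [div_le_iff₀ h] at hm; linarith
      · rw [← h] at hcond ⊢; simp at hcond ⊢; exact hcond
    have hK : G ≤ b * min t β - r * β := by
      rcases le_total t β with h | h
      · rw [min_eq_left h]
        rcases lt_or_ge 0 r with h' | h'
        · rw [le_div_iff₀ h'] at hM; linarith
        · nlinarith [mul_nonneg (neg_nonneg.mpr h') (sub_nonneg.mpr h)]
      · rw [min_eq_right h]; linarith
    have hf := hfe (by nlinarith)
    rw [hu hf, hrho]
    rw [max_mul_of_nonneg _ _ hs.le]
    apply max_le <;> nlinarith
  · exact absurd hm (not_le.mpr (EReal.coe_lt_top β))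

/-- **Sufficient conditions for pure Nash equilibrium in proper delegation games.**
Let `p` be a valid joint strategy profile of a proper delegation game with resulting
per-unit delegation reward `r = rOf g p`.  Suppose:
(i) every delegator delegates only to (active) feasible pools;
(ii) every non-idle player `i` earns utility at least `ε_i`;
(iii) every idle player `i` satisfies `max r (α(s_i, cmin)) · s_i ≤ ε_i`; and
(iv) every SPO `i` (with pledge `λ_i = s_i < τ` and external delegation `β_i`)
satisfies `β⁻(λ_i, c_i, ε_i, r) ≤ β_i ≤ β⁺(λ_i, c_i, ε_i, r)`.
Then `p` is a pure Nash equilibrium. -/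
theorem PNE_sufficient_conditions {n : ℕ}
    (g : ProperDelegationGame n) (p : Fin n → ProperDelegationGame.Action n)
    (hvalid : g.ValidProfile p)
    (h1 : ∀ i (d : Fin n → ℝ), p i = ProperDelegationGame.Action.deleg d →
      ∀ j, 0 < d j → feasible g p j)
    (h2 : ∀ i, p i ≠ ProperDelegationGame.Action.idle → g.eps i ≤ utility g p i)
    (h3 : ∀ i, p i = ProperDelegationGame.Action.idle →
      max (rOf g p) (g.alpha (g.s i) g.cmin) * g.s i ≤ g.eps i)
    (h4 : ∀ i, p i = ProperDelegationGame.Action.spo →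
      betaMinus g (g.s i) (g.c i) (g.eps i) (rOf g p) ≤ (extDeleg p i : EReal) ∧
      (extDeleg p i : EReal) ≤ betaPlus g (g.s i) (g.c i) (g.eps i) (rOf g p)) :
    IsPNE g p := by
  intro i q hq
  have key : p i ≠ q → max (rOf g p) (g.alpha (g.s i) g.cmin) * g.s i ≤ utility g p i ∧
      g.eps i ≤ utility g p i := by
    intro _
    cases hp : p i with
    | idle =>
      have hu : utility g p i = g.eps i := by unfold utility; rw [hp]
      rw [hu]; exact ⟨h3 i hp, le_rfl⟩
    | spo => exact ⟨aux_spo_core g p hvalid i hp (h4 i hp), h2 i (by simp [hp])⟩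
    | deleg d =>
      refine ⟨?_, h2 i (by simp [hp])⟩
      rw [max_eq_left (aux_le_rOf g p i ⟨d, hp⟩)]
      have hi := hvalid i
      rw [hp] at hi
      have hu : utility g p i = ∑ j, delegReward g p i j := by unfold utility; rw [hp]
      rw [hu, ← hi.2.2, Finset.mul_sum]
      apply Finset.sum_le_sum
      intro j _
      have ha : delegAmt p i j = d j := by unfold delegAmt; rw [hp]
      unfold delegReward
      rw [ha]
      rcases (hi.2.1 j).lt_or_eq with h | h
      · have hf := h1 i d hp j h
        rw [if_pos hf.1, if_pos hf]
      · rw [← h]; simp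
  by_cases heq : p i = q
  · rw [← heq, Function.update_eq_self]
  obtain ⟨hk, he⟩ := key heq
  cases q with
  | idle =>
    have hu : utility g (Function.update p i Action.idle) i = g.eps i := by
      unfold utility; rw [Function.update_self]
    rw [hu]; exact he
  | spo =>
    refine le_trans (aux_spo_dev g p hvalid h1 i heq) (le_trans ?_ hk)
    exact mul_le_mul_of_nonneg_right (le_max_right _ _) (g.s_pos i).le
  | deleg d =>
    exact aux_deleg_dev g p hvalid i d hq _ (le_trans (g.eps_pos i).le he) hk
end

section
/- Sufficient condition for ex post SPO stability: Let f be a partial ex ante strategy for a proper delegation game with player types (s, c, ε) drawn with stakes s_i > 0, costs c_i ∈ [c_min, c_max] with c_min ≥ 0, and idle utilities ε_i > 0. If 0 < Def(f) ≤ Del(f) ≤ Cap(f), then f is ex post SPO stable for this draw of types: there exists a joint strategy profile p consistent with f which is a pure Nash equilibrium. Moreover p can be chosen so that a player i with f(s_i, c_i, ε_i) = 0 is idle if r·s_i < ε_i and is a delegator to feasible pools if r·s_i ≥ ε_i, where r = α(s*, c_min) and s* is as below. -/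
open scoped Classical

namespace ProperDelegationGame

variable {n : ℕ}

/-- The set of players not designated as SPOs by `f` whose threat of deviation is at
least `ε_i / s_i` (the candidates for the pivotal delegate). -/
noncomputable def pivotalSet (g : ProperDelegationGame n)
    (f : ℝ → ℝ → ℝ → Bool) : Finset (Fin n) :=
  Finset.univ.filter fun i =>
    f (g.s i) (g.c i) (g.eps i) = false ∧
    g.eps i / g.s i ≤ g.alpha (g.s i) g.cmin

/-- The per-unit delegation reward `r = α(s*, cmin)` determined by the pivotal
delegation stake `s* = max {s_i : f(s_i,c_i,ε_i) = 0 and α(s_i,cmin) ≥ ε_i/s_i}`,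
with `r = 0` if this set is empty. -/
noncomputable def rStar (g : ProperDelegationGame n)
    (f : ℝ → ℝ → ℝ → Bool) : ℝ :=
  if h : (pivotalSet g f).Nonempty then
    g.alpha ((pivotalSet g f).sup' h g.s) g.cmin
  else 0

/-- The total ex post stable delegation
`Del(f) = Σ_{i : f(s_i,c_i,ε_i)=0 and r·s_i ≥ ε_i} s_i`. -/
noncomputable def Del (g : ProperDelegationGame n)
    (f : ℝ → ℝ → ℝ → Bool) : ℝ :=
  ∑ i ∈ Finset.univ.filter (fun i =>
      f (g.s i) (g.c i) (g.eps i) = false ∧ g.eps i ≤ rStar g f * g.s i), g.s i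

/-- The total ex post pool deficit
`Def(f) = Σ_{i : f(s_i,c_i,ε_i)=1} β⁻(s_i, c_i, ε_i, r)`. -/
noncomputable def Def (g : ProperDelegationGame n)
    (f : ℝ → ℝ → ℝ → Bool) : EReal :=
  ∑ i ∈ Finset.univ.filter (fun i => f (g.s i) (g.c i) (g.eps i) = true),
    betaMinus g (g.s i) (g.c i) (g.eps i) (rStar g f)

/-- The total ex post pool capacity
`Cap(f) = Σ_{i : f(s_i,c_i,ε_i)=1} β⁺(s_i, c_i, ε_i, r)`. -/
noncomputable def Cap (g : ProperDelegationGame n)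
    (f : ℝ → ℝ → ℝ → Bool) : EReal :=
  ∑ i ∈ Finset.univ.filter (fun i => f (g.s i) (g.c i) (g.eps i) = true),
    betaPlus g (g.s i) (g.c i) (g.eps i) (rStar g f)

end ProperDelegationGame

open ProperDelegationGame

namespace ProperDelegationGame

variable {n : ℕ}

theorem hlp_rOf_le (g : ProperDelegationGame n) (p : Fin n → Action n) (R : ℝ) (hR : 0 ≤ R)
    (h : ∀ i, isDeleg p i → g.alpha (g.s i) g.cmin ≤ R) : rOf g p ≤ R := by
  unfold rOf
  split_ifs with hne
  · apply Finset.sup'_le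
    intro i hi
    exact h i (by simpa using hi)
  · exact hR

theorem hlp_le_rOf (g : ProperDelegationGame n) (p : Fin n → Action n) (i : Fin n)
    (h : isDeleg p i) : g.alpha (g.s i) g.cmin ≤ rOf g p := by
  have hm : i ∈ Finset.univ.filter fun i => isDeleg p i := by simpa using h
  unfold rOf
  rw [dif_pos ⟨i, hm⟩]
  exact Finset.le_sup' (fun i => g.alpha (g.s i) g.cmin) hm

theorem hlp_delegAmt_nonneg (g : ProperDelegationGame n) (p : Fin n → Action n)
    (hv : g.ValidProfile p) (i j : Fin n) : 0 ≤ delegAmt p i j := by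
  have h := hv i
  unfold delegAmt
  cases hp : p i with
  | idle => simp
  | spo => simp
  | deleg d =>
    rw [hp] at h
    exact h.2.1 j

theorem hlp_deleg_le (g : ProperDelegationGame n) (q : Fin n → Action n)
    (hv : g.ValidProfile q) (hr : 0 ≤ rOf g q) (i : Fin n) (d : Fin n → ℝ)
    (hq : q i = Action.deleg d) : utility g q i ≤ rOf g q * g.s i := by
  have h := hv i
  rw [hq] at h
  have hu : utility g q i = ∑ j, delegReward g q i j := by
    unfold utility; rw [hq]
  rw [hu, ← h.2.2, Finset.mul_sum]
  apply Finset.sum_le_sum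
  intro j _
  have hd : delegAmt q i j = d j := by unfold delegAmt; rw [hq]
  have hdj := h.2.1 j
  unfold delegReward
  split_ifs with h1 h2
  · rw [hd]
  · have hlt : rho g (pledge g q j) (extDeleg q j) < rOf g q * poolSize g q j := by
      by_contra hc
      exact h2 ⟨h1, not_lt.mp hc⟩
    have hpos : 0 < poolSize g q j := by
      have : 0 ≤ extDeleg q j :=
        Finset.sum_nonneg fun i _ => hlp_delegAmt_nonneg g q hv i j
      have h3 : pledge g q j = g.s j := by unfold pledge; rw [if_pos h1]
      have := g.s_pos j
      unfold poolSize
      linarith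
    rw [hd, div_mul_eq_mul_div, div_le_iff₀ hpos]
    nlinarith [mul_le_mul_of_nonneg_left hlt.le hdj]
  · positivity

theorem hlp_spo_zero (g : ProperDelegationGame n) (q : Fin n → Action n) (i : Fin n)
    (hq : q i = Action.spo) (he : extDeleg q i = 0) : utility g q i = g.a (g.s i) - g.c i := by
  have hs := g.s_pos i
  have ht := g.tau_gt i
  have hp : pledge g q i = g.s i := by exact if_pos hq
  have hrho : rho g (g.s i) 0 = g.a (g.s i) := by
    unfold rho
    rw [min_eq_right (by linarith)]
    ring
  have hu : utility g q i = (if feasible g q i then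
        rho g (g.s i) (extDeleg q i) - rOf g q * extDeleg q i
       else (g.s i / poolSize g q i) * rho g (g.s i) (extDeleg q i)) - g.c i := by
    unfold utility; rw [hq]
  rw [hu]
  unfold poolSize
  rw [he, hp, hrho, add_zero, div_self hs.ne']
  split_ifs <;> ring

theorem hlp_interp {ι : Type*} (F : Finset ι) (lo hi : ι → ℝ) (D : ℝ)
    (hle : ∀ j ∈ F, lo j ≤ hi j) (h1 : ∑ j ∈ F, lo j ≤ D) (h2 : D ≤ ∑ j ∈ F, hi j) :
    ∃ β : ι → ℝ, (∀ j ∈ F, lo j ≤ β j ∧ β j ≤ hi j) ∧ ∑ j ∈ F, β j = D := by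
  rcases eq_or_lt_of_le (h1.trans h2) with h | h
  · exact ⟨lo, fun j hj => ⟨le_rfl, hle j hj⟩, by linarith⟩
  · set L := ∑ j ∈ F, lo j
    set H := ∑ j ∈ F, hi j
    have hHL : 0 < H - L := by linarith
    obtain ⟨t, ht⟩ : ∃ t, t = (D - L) / (H - L) := ⟨_, rfl⟩
    have ht0 : 0 ≤ t := by rw [ht]; exact div_nonneg (by linarith) hHL.le
    have ht1 : t ≤ 1 := by rw [ht, div_le_one hHL]; linarith
    refine ⟨fun j => lo j + t * (hi j - lo j), fun j hj => ⟨?_, ?_⟩, ?_⟩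
    · have := hle j hj
      have := mul_nonneg ht0 (sub_nonneg.mpr this)
      linarith
    · have := hle j hj
      have := mul_le_mul_of_nonneg_right ht1 (sub_nonneg.mpr this)
      linarith
    · rw [Finset.sum_add_distrib, ← Finset.mul_sum, Finset.sum_sub_distrib]
      change L + t * (H - L) = D
      rw [ht, div_mul_cancel₀ _ hHL.ne']
      ring

theorem hlp_coe_sum {ι : Type*} (F : Finset ι) (x : ι → ℝ) :
    ∑ j ∈ F, ((x j : ℝ) : EReal) = ((∑ j ∈ F, x j : ℝ) : EReal) := by
  induction F using Finset.induction_on with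
  | empty => simp
  | insert a s ha ih => rw [Finset.sum_insert ha, Finset.sum_insert ha, ih, EReal.coe_add]

/-- Content of an SPO. -/
theorem hlp_content (g : ProperDelegationGame n) (j : Fin n) (r β : ℝ) (hr : 0 < r)
    (hc : gap g (g.s j) (g.c j) (g.eps j) r ≤ (g.b (g.s j) - r) * (g.tau - g.s j))
    (h1 : gap g (g.s j) (g.c j) (g.eps j) r / (g.b (g.s j) - r) ≤ β)
    (h2 : β ≤ (g.b (g.s j) * (g.tau - g.s j) - gap g (g.s j) (g.c j) (g.eps j) r) / r)
    (hg0 : 0 ≤ gap g (g.s j) (g.c j) (g.eps j) r) :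
    g.a (g.s j) + gap g (g.s j) (g.c j) (g.eps j) r ≤ rho g (g.s j) β - r * β := by
  set G := gap g (g.s j) (g.c j) (g.eps j) r
  have ht := g.tau_gt j
  have hb : 0 ≤ g.b (g.s j) - r := by
    by_contra hcon
    have : (g.b (g.s j) - r) * (g.tau - g.s j) < 0 :=
      mul_neg_of_neg_of_pos (not_le.mp hcon) (by linarith)
    linarith
  unfold rho
  rcases le_total (g.tau - g.s j) β with h | h
  · rw [min_eq_left h]
    rw [le_div_iff₀ hr] at h2
    linarith
  · rw [min_eq_right h]
    rcases eq_or_lt_of_le hb with h0 | h0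
    · rw [← h0] at hc
      have hG : G ≤ 0 := by linarith
      have : g.b (g.s j) = r := by linarith
      rw [this]; linarith
    · rw [div_le_iff₀ h0] at h1
      linarith

theorem hlp_gap (g : ProperDelegationGame n) (j : Fin n) (r : ℝ) :
    0 ≤ gap g (g.s j) (g.c j) (g.eps j) r ∧
    g.eps j ≤ g.a (g.s j) + gap g (g.s j) (g.c j) (g.eps j) r - g.c j ∧
    r * g.s j ≤ g.a (g.s j) + gap g (g.s j) (g.c j) (g.eps j) r - g.c j ∧
    g.alpha (g.s j) g.cmin * g.s j ≤
      g.a (g.s j) + gap g (g.s j) (g.c j) (g.eps j) r - g.c j := by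
  have hs := g.s_pos j
  have hα : g.alpha (g.s j) g.cmin * g.s j = g.a (g.s j) - g.cmin := by
    unfold alpha; rw [div_mul_cancel₀ _ hs.ne']
  have hm0 : 0 ≤ max (r - g.alpha (g.s j) g.cmin) 0 * g.s j :=
    mul_nonneg (le_max_right _ _) hs.le
  have hm1 : (r - g.alpha (g.s j) g.cmin) * g.s j ≤
      max (r - g.alpha (g.s j) g.cmin) 0 * g.s j :=
    mul_le_mul_of_nonneg_right (le_max_left _ _) hs.le
  have hcm := g.cmin_le j
  have e1 : g.eps j + g.c j - g.a (g.s j) ≤ gap g (g.s j) (g.c j) (g.eps j) r :=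
    le_max_left _ _
  have e2 : max (r - g.alpha (g.s j) g.cmin) 0 * g.s j + (g.c j - g.cmin) ≤
      gap g (g.s j) (g.c j) (g.eps j) r := le_max_right _ _
  rw [sub_mul] at hm1
  refine ⟨?_, ?_, ?_, ?_⟩ <;> linarith

/-- Facts on the pivotal reward. -/
theorem hlp_pivot (g : ProperDelegationGame n) (f : ℝ → ℝ → ℝ → Bool) (hr : rStar g f ≠ 0) :
    (∃ k, f (g.s k) (g.c k) (g.eps k) = false ∧ g.eps k ≤ rStar g f * g.s k ∧
      g.alpha (g.s k) g.cmin = rStar g f) ∧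
    (∀ i, f (g.s i) (g.c i) (g.eps i) = false → g.eps i ≤ rStar g f * g.s i →
      g.alpha (g.s i) g.cmin ≤ rStar g f) ∧
    (∀ i, f (g.s i) (g.c i) (g.eps i) = false → rStar g f * g.s i < g.eps i →
      g.alpha (g.s i) g.cmin * g.s i ≤ g.eps i) := by
  have hne : (pivotalSet g f).Nonempty := by
    by_contra h
    exact hr (by unfold rStar; rw [dif_neg h])
  have hrs : rStar g f = g.alpha ((pivotalSet g f).sup' hne g.s) g.cmin := by
    unfold rStar; rw [dif_pos hne]
  obtain ⟨k, hk, hks⟩ := Finset.exists_mem_eq_sup' hne g.s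
  rw [hks] at hrs
  have hmax : ∀ i ∈ pivotalSet g f, g.s i ≤ g.s k := by
    intro i hi
    rw [← hks]
    exact Finset.le_sup' g.s hi
  have hmem : ∀ i, i ∈ pivotalSet g f ↔ (f (g.s i) (g.c i) (g.eps i) = false ∧
      g.eps i / g.s i ≤ g.alpha (g.s i) g.cmin) := by
    intro i; simp [pivotalSet]
  have hmono : ∀ i j, g.s i ≤ g.s j → g.alpha (g.s i) g.cmin ≤ g.alpha (g.s j) g.cmin :=
    fun i j h => g.alpha_mono _ _ (g.s_pos i) h ⟨j, le_rfl⟩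
  have hkk := (hmem k).1 hk
  refine ⟨⟨k, hkk.1, ?_, hrs.symm⟩, ?_, ?_⟩
  · rw [hrs]
    exact (div_le_iff₀ (g.s_pos k)).1 hkk.2
  · intro i hi he
    rw [hrs] at he ⊢
    rcases le_or_gt (g.s i) (g.s k) with h | h
    · exact hmono i k h
    · exfalso
      have h1 := hmono k i h.le
      have h2 : g.eps i / g.s i ≤ g.alpha (g.s k) g.cmin := (div_le_iff₀ (g.s_pos i)).2 he
      exact absurd (hmax i ((hmem i).2 ⟨hi, h2.trans h1⟩)) (not_le.mpr h)
  · intro i hi he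
    by_contra hc
    have hc := not_le.mp hc
    have h2 : g.eps i / g.s i ≤ g.alpha (g.s i) g.cmin := (div_le_iff₀ (g.s_pos i)).2 hc.le
    have h3 := hmono i k (hmax i ((hmem i).2 ⟨hi, h2⟩))
    rw [← hrs] at h3
    have := mul_le_mul_of_nonneg_right h3 (g.s_pos i).le
    linarith

end ProperDelegationGame

/-- **Sufficient condition for ex post SPO stability.**
Let `f : ℝ³ → {0,1}` be a partial ex ante strategy for a proper delegation game with
stakes `s_i > 0`, costs `c_i ∈ [cmin, cmax]` with `cmin ≥ 0`, and idle utilities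
`ε_i > 0`.  If `0 < Def(f) ≤ Del(f) ≤ Cap(f)`, then `f` is ex post SPO stable for this
draw of types: there exists a joint strategy profile `p` consistent with `f` (player
`i` is an SPO exactly when `f(s_i,c_i,ε_i) = 1`) which is a pure Nash equilibrium.
Moreover `p` can be chosen so that a player `i` with `f(s_i,c_i,ε_i) = 0` is idle when
`r·s_i < ε_i` and is a delegator (delegating only to feasible pools) when
`r·s_i ≥ ε_i`, where `r = α(s*, cmin)`. -/
theorem ex_post_SPO_stable_sufficient {n : ℕ}
    (g : ProperDelegationGame n) (cmax : ℝ) (hcmax : ∀ i, g.c i ≤ cmax)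
    (f : ℝ → ℝ → ℝ → Bool)
    (hpos : 0 < Def g f)
    (hDefDel : Def g f ≤ ((Del g f : ℝ) : EReal))
    (hDelCap : ((Del g f : ℝ) : EReal) ≤ Cap g f) :
    ∃ p : Fin n → ProperDelegationGame.Action n,
      g.ValidProfile p ∧
      (∀ i, isSPO p i ↔ f (g.s i) (g.c i) (g.eps i) = true) ∧
      IsPNE g p ∧
      (∀ i, f (g.s i) (g.c i) (g.eps i) = false →
        (rStar g f * g.s i < g.eps i → p i = ProperDelegationGame.Action.idle) ∧
        (g.eps i ≤ rStar g f * g.s i → isDeleg p i)) ∧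
      (∀ i (d : Fin n → ℝ), p i = ProperDelegationGame.Action.deleg d →
        ∀ j, 0 < d j → feasible g p j) := by
  classical
  obtain ⟨r, hrdef⟩ : ∃ r, r = rStar g f := ⟨_, rfl⟩
  set F := Finset.univ.filter (fun i => f (g.s i) (g.c i) (g.eps i) = true) with hF
  have hFmem : ∀ j, j ∈ F ↔ f (g.s j) (g.c j) (g.eps j) = true := by intro j; simp [hF]
  -- the content condition holds for all SPOs
  have hcond : ∀ j ∈ F, gap g (g.s j) (g.c j) (g.eps j) r ≤
      (g.b (g.s j) - r) * (g.tau - g.s j) := by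
    intro j hj
    by_contra hcon
    have hbot : betaPlus g (g.s j) (g.c j) (g.eps j) (rStar g f) = ⊥ := by
      rw [← hrdef]
      unfold betaPlus
      rw [if_neg hcon]
    have : Cap g f = ⊥ := by
      unfold Cap
      rw [← Finset.add_sum_erase F _ hj, hbot, EReal.bot_add]
    rw [this, le_bot_iff] at hDelCap
    exact EReal.coe_ne_bot _ hDelCap
  have hDefc : Def g f = ((∑ j ∈ F, gap g (g.s j) (g.c j) (g.eps j) r / (g.b (g.s j) - r) : ℝ) :
      EReal) := by
    rw [← hlp_coe_sum]
    unfold Def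
    apply Finset.sum_congr rfl
    intro j hj
    rw [← hrdef]
    unfold betaMinus
    rw [if_pos (hcond j hj)]
  have hCapc : Cap g f = ((∑ j ∈ F, (g.b (g.s j) * (g.tau - g.s j) -
      gap g (g.s j) (g.c j) (g.eps j) r) / r : ℝ) : EReal) := by
    rw [← hlp_coe_sum]
    unfold Cap
    apply Finset.sum_congr rfl
    intro j hj
    rw [← hrdef]
    unfold betaPlus
    rw [if_pos (hcond j hj)]
  have hDelpos : 0 < Del g f := by
    have := hpos.trans_le hDefDel
    exact_mod_cast this
  rw [hDefc, EReal.coe_le_coe_iff] at hDefDel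
  rw [hCapc, EReal.coe_le_coe_iff] at hDelCap
  have hDelEq : Del g f = ∑ i ∈ Finset.univ.filter (fun i =>
      f (g.s i) (g.c i) (g.eps i) = false ∧ g.eps i ≤ r * g.s i), g.s i := by
    rw [hrdef]; rfl
  have hr : 0 < r := by
    obtain ⟨i, hi, _⟩ := Finset.exists_ne_zero_of_sum_ne_zero (hDelEq ▸ hDelpos.ne')
    have hi2 := (Finset.mem_filter.1 hi).2.2
    have h1 := g.eps_pos i
    have h2 := g.s_pos i
    exact pos_of_mul_pos_left (h1.trans_le hi2) h2.le
  obtain ⟨⟨k, hkf, hke, hkα⟩, hpiv1, hpiv2⟩ := hlp_pivot g f (hrdef ▸ hr.ne')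
  rw [← hrdef] at hke hkα hpiv1 hpiv2
  rw [← hrdef]
  obtain ⟨β, hβ, hβsum⟩ := hlp_interp F
    (fun j => gap g (g.s j) (g.c j) (g.eps j) r / (g.b (g.s j) - r))
    (fun j => (g.b (g.s j) * (g.tau - g.s j) - gap g (g.s j) (g.c j) (g.eps j) r) / r)
    (Del g f) (by
      intro j hj
      have hc := hcond j hj
      have ht := g.tau_gt j
      have hg0 := (hlp_gap g j r).1
      have hb : 0 ≤ g.b (g.s j) - r := by
        by_contra hcon
        have : (g.b (g.s j) - r) * (g.tau - g.s j) < 0 :=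
          mul_neg_of_neg_of_pos (not_le.mp hcon) (by linarith)
        linarith
      have h1 : gap g (g.s j) (g.c j) (g.eps j) r / (g.b (g.s j) - r) ≤ g.tau - g.s j :=
        div_le_of_le_mul₀ hb (by linarith) (by linarith)
      refine h1.trans ?_
      rw [le_div_iff₀ hr]
      linarith) hDefDel hDelCap
  have hβ0 : ∀ j ∈ F, 0 ≤ β j := by
    intro j hj
    have hc := hcond j hj
    have ht := g.tau_gt j
    have hg0 := (hlp_gap g j r).1
    have hb : 0 ≤ g.b (g.s j) - r := by
      by_contra hcon
      have : (g.b (g.s j) - r) * (g.tau - g.s j) < 0 :=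
        mul_neg_of_neg_of_pos (not_le.mp hcon) (by linarith)
      linarith
    exact (div_nonneg hg0 hb).trans (hβ j hj).1
  -- the profile
  let dl : Fin n → Fin n → ℝ := fun i j => if j ∈ F then g.s i * β j / Del g f else 0
  let p : Fin n → ProperDelegationGame.Action n := fun i =>
    if f (g.s i) (g.c i) (g.eps i) = true then Action.spo
    else if g.eps i ≤ r * g.s i then Action.deleg (dl i) else Action.idle
  have hpspo : ∀ i, f (g.s i) (g.c i) (g.eps i) = true → p i = Action.spo := by
    intro i hi; simp only [p]; rw [if_pos hi]
  have hpdel : ∀ i, f (g.s i) (g.c i) (g.eps i) = false → g.eps i ≤ r * g.s i →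
      p i = Action.deleg (dl i) := by
    intro i hi he; simp only [p]; rw [if_neg (by simp [hi]), if_pos he]
  have hpidle : ∀ i, f (g.s i) (g.c i) (g.eps i) = false → r * g.s i < g.eps i →
      p i = Action.idle := by
    intro i hi he; simp only [p]; rw [if_neg (by simp [hi]), if_neg (not_le.mpr he)]
  have hcases : ∀ i, f (g.s i) (g.c i) (g.eps i) = true ∨
      (f (g.s i) (g.c i) (g.eps i) = false ∧ g.eps i ≤ r * g.s i) ∨
      (f (g.s i) (g.c i) (g.eps i) = false ∧ r * g.s i < g.eps i) := by
    intro i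
    cases hfi : f (g.s i) (g.c i) (g.eps i)
    · right
      rcases le_or_gt (g.eps i) (r * g.s i) with h | h
      · exact Or.inl ⟨rfl, h⟩
      · exact Or.inr ⟨rfl, h⟩
    · exact Or.inl rfl
  have hspo : ∀ i, isSPO p i ↔ f (g.s i) (g.c i) (g.eps i) = true := by
    intro i
    refine ⟨fun h => ?_, hpspo i⟩
    rcases hcases i with h1 | ⟨h1, h2⟩ | ⟨h1, h2⟩
    · exact h1
    · have := (hpdel i h1 h2).symm.trans h
      cases this
    · have := (hpidle i h1 h2).symm.trans h
      cases this
  have hisdel : ∀ i, isDeleg p i → f (g.s i) (g.c i) (g.eps i) = false ∧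
      g.eps i ≤ r * g.s i := by
    rintro i ⟨d, h⟩
    rcases hcases i with h1 | h1 | ⟨h1, h2⟩
    · have := (hpspo i h1).symm.trans h
      cases this
    · exact h1
    · have := (hpidle i h1 h2).symm.trans h
      cases this
  have hdl0 : ∀ i j, 0 ≤ dl i j := by
    intro i j
    simp only [dl]
    split_ifs with h
    · exact div_nonneg (mul_nonneg (g.s_pos i).le (hβ0 j h)) hDelpos.le
    · exact le_rfl
  have hdlsum : ∀ i, ∑ j, dl i j = g.s i := by
    intro i
    simp only [dl]
    rw [← Finset.sum_filter, Finset.filter_mem_eq_inter, Finset.univ_inter,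
      ← Finset.sum_div, ← Finset.mul_sum, hβsum, mul_div_cancel_right₀ _ hDelpos.ne']
  have hvalid : g.ValidProfile p := by
    intro i
    rcases hcases i with h1 | ⟨h1, h2⟩ | ⟨h1, h2⟩
    · rw [hpspo i h1]; trivial
    · rw [hpdel i h1 h2]
      refine ⟨?_, hdl0 i, hdlsum i⟩
      simp only [dl]
      rw [if_neg]
      rw [hFmem, h1]; simp
    · rw [hpidle i h1 h2]; trivial
  have hrOf : rOf g p = r := by
    apply le_antisymm
    · exact hlp_rOf_le g p r hr.le fun i hi => hpiv1 i (hisdel i hi).1 (hisdel i hi).2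
    · have := hlp_le_rOf g p k ⟨_, hpdel k hkf hke⟩
      linarith
  have hext : ∀ j ∈ F, extDeleg p j = β j := by
    intro j hj
    have h1 : ∀ i, delegAmt p i j = if (f (g.s i) (g.c i) (g.eps i) = false ∧
        g.eps i ≤ r * g.s i) then g.s i * (β j / Del g f) else 0 := by
      intro i
      unfold delegAmt
      rcases hcases i with h1 | ⟨h1, h2⟩ | ⟨h1, h2⟩
      · rw [hpspo i h1, if_neg (by simp [h1])]
      · rw [hpdel i h1 h2, if_pos ⟨h1, h2⟩]
        simp only [dl]
        rw [if_pos hj, mul_div_assoc]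
      · rw [hpidle i h1 h2, if_neg (fun h => absurd h.2 (not_le.mpr h2))]
    unfold extDeleg
    rw [Finset.sum_congr rfl fun i _ => h1 i, ← Finset.sum_filter, ← Finset.sum_mul,
      ← hDelEq, mul_div_cancel₀ _ hDelpos.ne']
  have hcont : ∀ j ∈ F, g.a (g.s j) + gap g (g.s j) (g.c j) (g.eps j) r ≤
      rho g (g.s j) (β j) - r * β j := fun j hj =>
    hlp_content g j r (β j) hr (hcond j hj) (hβ j hj).1 (hβ j hj).2 (hlp_gap g j r).1
  have hfeas : ∀ j ∈ F, feasible g p j := by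
    intro j hj
    have h1 := hpspo j ((hFmem j).1 hj)
    refine ⟨h1, ?_⟩
    have hpl : pledge g p j = g.s j := if_pos h1
    unfold poolSize
    rw [hpl, hext j hj, hrOf]
    have h2 := hcont j hj
    have h3 := (hlp_gap g j r).2.2.1
    have h4 := g.cmin_le j
    have h5 := g.cmin_nonneg
    nlinarith
  have huspo : ∀ j ∈ F, g.a (g.s j) + gap g (g.s j) (g.c j) (g.eps j) r - g.c j ≤
      utility g p j := by
    intro j hj
    have hu : utility g p j = (if feasible g p j then
        rho g (g.s j) (extDeleg p j) - rOf g p * extDeleg p j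
       else (g.s j / poolSize g p j) * rho g (g.s j) (extDeleg p j)) - g.c j := by
      unfold utility; rw [hpspo j ((hFmem j).1 hj)]
    rw [hu, if_pos (hfeas j hj), hext j hj, hrOf]
    linarith [hcont j hj]
  have hudel : ∀ i, f (g.s i) (g.c i) (g.eps i) = false → g.eps i ≤ r * g.s i →
      utility g p i = r * g.s i := by
    intro i h1 h2
    have hu : utility g p i = ∑ j, delegReward g p i j := by
      unfold utility; rw [hpdel i h1 h2]
    rw [hu, ← hdlsum i, Finset.mul_sum]
    apply Finset.sum_congr rfl
    intro j _
    have hd : delegAmt p i j = dl i j := by unfold delegAmt; rw [hpdel i h1 h2]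
    unfold delegReward
    by_cases hj : j ∈ F
    · rw [if_pos ((hspo j).2 ((hFmem j).1 hj)), if_pos (hfeas j hj), hrOf, hd]
    · rw [if_neg (fun h => hj ((hFmem j).2 ((hspo j).1 h)))]
      simp only [dl]
      rw [if_neg hj, mul_zero]
  have huidle : ∀ i, f (g.s i) (g.c i) (g.eps i) = false → r * g.s i < g.eps i →
      utility g p i = g.eps i := by
    intro i h1 h2
    unfold utility; rw [hpidle i h1 h2]
  -- deviations to delegation
  have hdevd : ∀ i d, g.ValidAction i (Action.deleg d) →
      utility g (Function.update p i (Action.deleg d)) i ≤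
        max (r * g.s i) (g.alpha (g.s i) g.cmin * g.s i) := by
    intro i d hd
    obtain ⟨q, hq⟩ : ∃ q, q = Function.update p i (Action.deleg d) := ⟨_, rfl⟩
    rw [← hq]
    have hqi : q i = Action.deleg d := by rw [hq, Function.update_self]
    have hqj : ∀ j, j ≠ i → q j = p j := fun j hj => by
      rw [hq, Function.update_of_ne hj]
    have hqv : g.ValidProfile q := by
      intro j
      by_cases hj : j = i
      · subst hj; rw [hqi]; exact hd
      · rw [hqj j hj]; exact hvalid j
    have hge : r ≤ rOf g q := by
      rw [← hkα]
      apply hlp_le_rOf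
      by_cases hj : k = i
      · subst hj; exact ⟨d, hqi⟩
      · exact ⟨dl k, by rw [hqj k hj]; exact hpdel k hkf hke⟩
    have hle : rOf g q ≤ max r (g.alpha (g.s i) g.cmin) := by
      apply hlp_rOf_le g q _ (hr.le.trans (le_max_left _ _))
      intro j hj
      by_cases hji : j = i
      · subst hji; exact le_max_right _ _
      · obtain ⟨d', hd'⟩ := hj
        have := hisdel j ⟨d', by rw [← hqj j hji]; exact hd'⟩
        exact (hpiv1 j this.1 this.2).trans (le_max_left _ _)
    have h1 := hlp_deleg_le g q hqv (hr.le.trans hge) i d hqi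
    rw [← max_mul_of_nonneg _ _ (g.s_pos i).le]
    exact h1.trans (mul_le_mul_of_nonneg_right hle (g.s_pos i).le)
  -- deviations of non-SPOs to operating a pool
  have hdevs : ∀ i, f (g.s i) (g.c i) (g.eps i) = false →
      utility g (Function.update p i Action.spo) i ≤ g.alpha (g.s i) g.cmin * g.s i := by
    intro i hi
    have hiF : i ∉ F := by rw [hFmem, hi]; simp
    rw [hlp_spo_zero g _ i (Function.update_self _ _ _)]
    · unfold alpha
      rw [div_mul_cancel₀ _ (g.s_pos i).ne']
      linarith [g.cmin_le i]
    · unfold extDeleg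
      apply Finset.sum_eq_zero
      intro j _
      unfold delegAmt
      by_cases hj : j = i
      · subst hj; rw [Function.update_self]
      · rw [Function.update_of_ne hj]
        rcases hcases j with h1 | ⟨h1, h2⟩ | ⟨h1, h2⟩
        · rw [hpspo j h1]
        · rw [hpdel j h1 h2]
          simp only [dl]
          rw [if_neg hiF]
        · rw [hpidle j h1 h2]
  have hdevi : ∀ i, utility g (Function.update p i Action.idle) i = g.eps i := by
    intro i
    unfold utility; rw [Function.update_self]
  refine ⟨p, hvalid, hspo, ?_, ?_, ?_⟩
  · intro i q hq
    rcases hcases i with h1 | ⟨h1, h2⟩ | ⟨h1, h2⟩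
    · have hu := huspo i ((hFmem i).2 h1)
      obtain ⟨_, g1, g2, g3⟩ := hlp_gap g i r
      cases q with
      | idle => rw [hdevi]; linarith
      | spo => rw [← hpspo i h1, Function.update_eq_self]
      | deleg d => exact (hdevd i d hq).trans (max_le (by linarith) (by linarith))
    · have hα : g.alpha (g.s i) g.cmin * g.s i ≤ r * g.s i :=
        mul_le_mul_of_nonneg_right (hpiv1 i h1 h2) (g.s_pos i).le
      rw [hudel i h1 h2]
      cases q with
      | idle => rw [hdevi]; exact h2
      | spo => exact (hdevs i h1).trans hα
      | deleg d => exact (hdevd i d hq).trans (max_le le_rfl hα)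
    · have hα := hpiv2 i h1 h2
      rw [huidle i h1 h2]
      cases q with
      | idle => rw [hdevi]
      | spo => exact (hdevs i h1).trans hα
      | deleg d => exact (hdevd i d hq).trans (max_le h2.le hα)
  · intro i hi
    exact ⟨hpidle i hi, fun h => ⟨_, hpdel i hi h⟩⟩
  · intro i d hd j hj
    have h1 := hisdel i ⟨d, hd⟩
    have h2 := (hpdel i h1.1 h1.2).symm.trans hd
    injection h2 with h3
    subst h3
    apply hfeas
    by_contra hjF
    simp only [dl] at hj
    rw [if_neg hjF] at hj
    exact lt_irrefl _ hj
end
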